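/- Let D = (V, A) be a digraph, k ≥ 0 an integer, c_1, …, c_{k+1} ≤ |V| integers, and U_1, …, U_{k+1} ⊆ V with |U_i| ≤ c_i for 1 ≤ i ≤ k+1. Then there exist pairwise arc-disjoint spanning branchings F_1, …, F_{k+1} with R(F_i) ⊇ U_i and |R(F_i)| = c_i for 1 ≤ i ≤ k+1 if and only if for every subset I ⊆ {1, …, k+1} and every subpartition P of V: Σ_{X∈P} d_A^-(X) ≥ Σ_{X∈P} |{i ∈ I : X ∩ U_i = ∅}| − Σ_{i∈I} (c_i − |U_i|). -/

import Mathlib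

/-!
Digraphs may have parallel arcs but no loops.  We model a digraph `D = (V, A)` by a finite
vertex type `V`, a finite arc type `α` and maps `tail head : α → V` with `tail a ≠ head a`.
Subdigraphs are given by their arc sets (`Finset α`) together with vertex sets (`Finset V`).
-/

attribute [local instance] Classical.propDecidable

/-- One step from `u` to `w` along an arc of the arc set `B`. -/
def DiStep {V α : Type} (tail head : α → V) (B : Finset α) (u w : V) : Prop :=
  ∃ a ∈ B, tail a = u ∧ head a = w

/-- `w` is reachable from `u` by a directed path using arcs of `B`. -/
def DiReach {V α : Type} (tail head : α → V) (B : Finset α) (u w : V) : Prop :=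
  Relation.ReflTransGen (DiStep tail head B) u w

/-- `d_B^-(X)`: the number of arcs of `B` with tail outside `X` and head in `X`. -/
noncomputable def inDeg {V α : Type} (tail head : α → V) (B : Finset α) (X : Finset V) : ℕ :=
  (B.filter fun a => tail a ∉ X ∧ head a ∈ X).card

/-- The arc set `B` is an `r`-arborescence with vertex set `S`:  all arcs have both ends in
`S`, the root `r` has in-degree `0`, every other vertex of `S` has in-degree exactly `1`, and
every vertex of `S` is reachable from `r` (hence there is exactly one directed path from `r`
to each vertex, and the underlying graph is a tree). -/
def IsArborescence {V α : Type} (tail head : α → V) (S : Finset V) (B : Finset α)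
    (r : V) : Prop :=
  r ∈ S ∧ (∀ a ∈ B, tail a ∈ S ∧ head a ∈ S) ∧
    (∀ a ∈ B, head a ≠ r) ∧
    (∀ v ∈ S, v ≠ r → (B.filter fun a => head a = v).card = 1) ∧
    ∀ v ∈ S, DiReach tail head B r v

/-- The arc set `B` is a branching with vertex set `S` and root set `R`: every component is
an arborescence rooted at the member of `R` it contains. -/
def IsBranching {V α : Type} (tail head : α → V) (S : Finset V) (B : Finset α)
    (R : Finset V) : Prop :=
  R ⊆ S ∧ (∀ a ∈ B, tail a ∈ S ∧ head a ∈ S) ∧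
    (∀ r ∈ R, ∀ a ∈ B, head a ≠ r) ∧
    (∀ v ∈ S, v ∉ R → (B.filter fun a => head a = v).card = 1) ∧
    ∀ v ∈ S, ∃ r ∈ R, DiReach tail head B r v

/-- The arc set of the component of a branching `B` rooted at `r`. -/
noncomputable def compArcs {V α : Type} (tail head : α → V) (B : Finset α) (r : V) :
    Finset α :=
  B.filter fun a => DiReach tail head B r (head a)

/-- A subpartition of the vertex set: a family of pairwise disjoint nonempty subsets. -/
def IsSubpartition {V : Type} (P : Finset (Finset V)) : Prop :=
  (∀ X ∈ P, X.Nonempty) ∧ ∀ X ∈ P, ∀ Y ∈ P, X ≠ Y → Disjoint X Y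

theorem inDeg_submod {V α : Type} (tail head : α → V) (B : Finset α) (X Y : Finset V) :
    inDeg tail head B (X ∩ Y) + inDeg tail head B (X ∪ Y) ≤
      inDeg tail head B X + inDeg tail head B Y := by
  unfold inDeg
  simp only [Finset.card_filter]
  rw [← Finset.sum_add_distrib, ← Finset.sum_add_distrib]
  apply Finset.sum_le_sum
  intro a _
  simp only [Finset.mem_inter, Finset.mem_union]
  by_cases h1 : tail a ∈ X <;> by_cases h2 : tail a ∈ Y <;> by_cases h3 : head a ∈ X <;>
    by_cases h4 : head a ∈ Y <;> simp [h1, h2, h3, h4]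

/-- Demand of a set: number of indices whose root set is missed. -/
noncomputable def dem {V J : Type} [Fintype J] (R : J → Finset V) (X : Finset V) : ℕ :=
  (Finset.univ.filter fun i => X ∩ R i = ∅).card

theorem dem_supermod {V J : Type} [Fintype J] (R : J → Finset V) (X Y : Finset V) :
    dem R X + dem R Y ≤ dem R (X ∩ Y) + dem R (X ∪ Y) := by
  unfold dem
  simp only [Finset.card_filter]
  rw [← Finset.sum_add_distrib, ← Finset.sum_add_distrib]
  apply Finset.sum_le_sum
  intro i _
  by_cases h1 : X ∩ R i = ∅ <;> by_cases h2 : Y ∩ R i = ∅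
  · have h3 : (X ∩ Y) ∩ R i = ∅ := by grind
    have h4 : (X ∪ Y) ∩ R i = ∅ := by grind
    simp [h1, h2, h3, h4]
  · have h3 : (X ∩ Y) ∩ R i = ∅ := by grind
    simp [h1, h2, h3]
  · have h3 : (X ∩ Y) ∩ R i = ∅ := by grind
    simp [h1, h2, h3]
  · simp [h1, h2]

theorem dem_supermod_strict {V J : Type} [Fintype J] (R : J → Finset V) (X Y : Finset V) (i : J)
    (hX : X ∩ R i ≠ ∅) (hY : Y ∩ R i ≠ ∅) (hXY : (X ∩ Y) ∩ R i = ∅) :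
    dem R X + dem R Y < dem R (X ∩ Y) + dem R (X ∪ Y) := by
  unfold dem
  simp only [Finset.card_filter]
  rw [← Finset.sum_add_distrib, ← Finset.sum_add_distrib]
  apply Finset.sum_lt_sum
  · intro i _
    by_cases h1 : X ∩ R i = ∅ <;> by_cases h2 : Y ∩ R i = ∅
    · have h3 : (X ∩ Y) ∩ R i = ∅ := by grind
      have h4 : (X ∪ Y) ∩ R i = ∅ := by grind
      simp [h1, h2, h3, h4]
    · have h3 : (X ∩ Y) ∩ R i = ∅ := by grind
      simp [h1, h2, h3]
    · have h3 : (X ∩ Y) ∩ R i = ∅ := by grind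
      simp [h1, h2, h3]
    · simp [h1, h2]
  · exact ⟨i, Finset.mem_univ _, by simp [hX, hY, hXY]⟩

theorem diReach_mono {V α : Type} {tail head : α → V} {B C : Finset α} (h : B ⊆ C) {u w : V}
    (hr : DiReach tail head B u w) : DiReach tail head C u w :=
  Relation.ReflTransGen.mono (r := DiStep tail head B) (p := DiStep tail head C)
    (fun _ _ ⟨a, ha, h1, h2⟩ => ⟨a, h ha, h1, h2⟩) _ _ hr

/-- One extension step in the Lovasz proof of the Edmonds theorem. -/
theorem edmonds_step {V α J : Type} [Fintype V] [Fintype J] (tail head : α → V)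
    (A : Finset α) (R : J → Finset V) (hne : ∀ i, (R i).Nonempty)
    (hcond : ∀ X : Finset V, X.Nonempty → dem R X ≤ inDeg tail head A X)
    (i : J) (hi : R i ≠ Finset.univ) :
    ∃ e ∈ A, tail e ∈ R i ∧ head e ∉ R i ∧
      ∀ X : Finset V, X.Nonempty →
        dem (Function.update R i (insert (head e) (R i))) X ≤ inDeg tail head (A.erase e) X := by
  set S : Finset (Finset V) := Finset.univ.filter fun X =>
    dem R X = inDeg tail head A X ∧ X ∩ R i ≠ ∅ ∧ X \ R i ≠ ∅ with hS
  have hSne : S.Nonempty := by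
    refine ⟨Finset.univ, ?_⟩
    simp only [hS, Finset.mem_filter, Finset.mem_univ, true_and]
    refine ⟨?_, ?_, ?_⟩
    · have h1 : dem R (Finset.univ : Finset V) = 0 := by
        unfold dem
        simp only [Finset.univ_inter, Finset.card_eq_zero]
        rw [Finset.filter_eq_empty_iff]
        intro j _
        exact (hne j).ne_empty
      have h2 : inDeg tail head A (Finset.univ : Finset V) = 0 := by
        unfold inDeg; simp
      rw [h1, h2]
    · simpa using (hne i).ne_empty
    · intro h
      apply hi
      rw [Finset.sdiff_eq_empty_iff_subset] at h
      exact Finset.univ_subset_iff.mp h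
  obtain ⟨X, hXS, hXmin⟩ := Finset.exists_min_image S Finset.card hSne
  simp only [hS, Finset.mem_filter, Finset.mem_univ, true_and] at hXS
  obtain ⟨hXt, hX1, hX2⟩ := hXS
  -- an arc inside X leaving R i
  have hlt : inDeg tail head A X < inDeg tail head A (X \ R i) := by
    refine lt_of_lt_of_le ?_ (hcond _ (Finset.nonempty_iff_ne_empty.mpr hX2))
    rw [← hXt]
    unfold dem
    apply Finset.card_lt_card
    refine Finset.ssubset_iff_subset_ne.mpr ⟨?_, ?_⟩
    · intro j hj
      simp only [Finset.mem_filter, Finset.mem_univ, true_and] at hj ⊢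
      grind
    · intro h
      have : i ∈ Finset.univ.filter fun j => X ∩ R j = ∅ := by
        rw [h]; simp
      simp at this
      exact hX1 this
  obtain ⟨e, heA, ht, hh⟩ : ∃ e ∈ A, tail e ∈ X ∩ R i ∧ head e ∈ X \ R i := by
    by_contra hno
    push Not at hno
    apply absurd hlt
    rw [not_lt]
    unfold inDeg
    apply Finset.card_le_card
    intro a ha
    simp only [Finset.mem_filter] at ha ⊢
    have := hno a ha.1
    grind
  refine ⟨e, heA, by grind, by grind, ?_⟩
  intro Y hY
  have hRi : tail e ∈ R i := by grind
  have hhi : head e ∉ R i := by grind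
  -- upper bound of new demand
  have hle : dem (Function.update R i (insert (head e) (R i))) Y ≤ dem R Y := by
    unfold dem
    apply Finset.card_le_card
    intro j hj
    simp only [Finset.mem_filter, Finset.mem_univ, true_and] at hj ⊢
    by_cases hji : j = i
    · subst hji
      simp only [Function.update_self] at hj
      grind
    · rwa [Function.update_of_ne hji] at hj
  by_cases hent : tail e ∉ Y ∧ head e ∈ Y
  · have hdeg : inDeg tail head (A.erase e) Y + 1 = inDeg tail head A Y := by
      unfold inDeg
      rw [Finset.filter_erase]
      apply Finset.card_erase_add_one
      simp [heA, hent]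
    by_cases hYR : Y ∩ R i = ∅
    · have : dem (Function.update R i (insert (head e) (R i))) Y < dem R Y := by
        unfold dem
        apply Finset.card_lt_card
        refine Finset.ssubset_iff_subset_ne.mpr ⟨?_, ?_⟩
        · intro j hj
          simp only [Finset.mem_filter, Finset.mem_univ, true_and] at hj ⊢
          by_cases hji : j = i
          · subst hji
            exact hYR
          · rwa [Function.update_of_ne hji] at hj
        · intro h
          have h3 : i ∈ Finset.univ.filter fun j => Y ∩ R j = ∅ := by
            simp [hYR]
          rw [← h] at h3
          simp only [Finset.mem_filter, Finset.mem_univ, true_and, Function.update_self] at h3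
          have : head e ∈ Y ∩ insert (head e) (R i) := by simp [hent.2]
          rw [h3] at this
          simp at this
      have := hcond Y hY
      omega
    · -- Y is not tight
      have hnt : dem R Y ≠ inDeg tail head A Y := by
        intro hYt
        have hXYne : (X ∩ Y).Nonempty := ⟨head e, by grind⟩
        have hXYne' : (X ∪ Y).Nonempty := ⟨head e, by grind⟩
        have c1 := hcond _ hXYne
        have c2 := hcond _ hXYne'
        have s1 := inDeg_submod tail head A X Y
        have s2 := dem_supermod R X Y
        have hint : (X ∩ Y) ∩ R i ≠ ∅ := by
          intro h0
          have := dem_supermod_strict R X Y i hX1 hYR h0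
          omega
        have hmem : X ∩ Y ∈ S := by
          simp only [hS, Finset.mem_filter, Finset.mem_univ, true_and]
          refine ⟨by omega, hint, ?_⟩
          apply Finset.nonempty_iff_ne_empty.mp
          exact ⟨head e, by grind⟩
        have h1 := hXmin _ hmem
        have h2 : (X ∩ Y).card < X.card := by
          apply Finset.card_lt_card
          refine Finset.ssubset_iff_subset_ne.mpr ⟨Finset.inter_subset_left, ?_⟩
          intro h
          have : tail e ∈ X ∩ Y := by rw [h]; grind
          grind
        omega
      have := hcond Y hY
      omega
  · have hdeg : inDeg tail head (A.erase e) Y = inDeg tail head A Y := by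
      unfold inDeg
      rw [Finset.filter_erase]
      rw [Finset.erase_eq_of_notMem]
      simp only [Finset.mem_filter, not_and]
      intro _ h1 h2
      exact hent ⟨h1, h2⟩
    rw [hdeg]
    exact hle.trans (hcond Y hY)

/-- The disjoint branchings theorem of Edmonds. -/
theorem edmonds {V α J : Type} [Fintype V] [Fintype J] (tail head : α → V) (n : ℕ) :
    ∀ (A : Finset α) (R : J → Finset V), (∀ i, (R i).Nonempty) →
    (∑ i, (Finset.univ \ R i).card = n) →
    (∀ X : Finset V, X.Nonempty → dem R X ≤ inDeg tail head A X) →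
    ∃ F : J → Finset α, (∀ i j, i ≠ j → Disjoint (F i) (F j)) ∧ (∀ i, F i ⊆ A) ∧
      ∀ i, IsBranching tail head Finset.univ (F i) (R i) := by
  induction n with
  | zero =>
    intro A R hne hn hcond
    refine ⟨fun _ => ∅, by simp, by simp, ?_⟩
    intro i
    have hi : R i = Finset.univ := by
      have := (Finset.sum_eq_zero_iff.mp hn) i (Finset.mem_univ _)
      rw [Finset.card_eq_zero, Finset.sdiff_eq_empty_iff_subset] at this
      exact Finset.univ_subset_iff.mp this
    rw [hi]
    refine ⟨by simp, by simp, by simp, by simp, ?_⟩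
    intro v _
    exact ⟨v, Finset.mem_univ _, Relation.ReflTransGen.refl⟩
  | succ n ih =>
    intro A R hne hn hcond
    obtain ⟨i, hi⟩ : ∃ i, R i ≠ Finset.univ := by
      by_contra hno
      push Not at hno
      simp [hno] at hn
    obtain ⟨e, heA, ht, hh, hc⟩ := edmonds_step tail head A R hne hcond i hi
    obtain ⟨F, hF1, hF2, hF3⟩ := ih (A.erase e) (Function.update R i (insert (head e) (R i)))
      (by
        intro j
        by_cases hji : j = i
        · subst hji; simp
        · rw [Function.update_of_ne hji]; exact hne j)
      (by
        rw [← Finset.add_sum_erase _ _ (Finset.mem_univ i)] at hn ⊢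
        have h1 : ∑ x ∈ Finset.univ.erase i,
            (Finset.univ \ Function.update R i (insert (head e) (R i)) x).card =
            ∑ x ∈ Finset.univ.erase i, (Finset.univ \ R x).card := by
          apply Finset.sum_congr rfl
          intro x hx
          rw [Function.update_of_ne (Finset.ne_of_mem_erase hx)]
        have h2 : (Finset.univ \ Function.update R i (insert (head e) (R i)) i).card + 1 =
            (Finset.univ \ R i).card := by
          rw [Function.update_self, Finset.sdiff_insert]
          apply Finset.card_erase_add_one
          simp [hh]
        omega)
      hc
    have heF : ∀ j, e ∉ F j := fun j h => by
      have := hF2 j h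
      simp at this
    refine ⟨Function.update F i (insert e (F i)), ?_, ?_, ?_⟩
    · intro a b hab
      by_cases ha : a = i
      · subst ha
        rw [Function.update_self, Function.update_of_ne hab.symm, Finset.disjoint_insert_left]
        exact ⟨heF b, hF1 _ _ hab⟩
      · rw [Function.update_of_ne ha]
        by_cases hb : b = i
        · subst hb
          rw [Function.update_self, Finset.disjoint_insert_right]
          exact ⟨heF a, hF1 _ _ hab⟩
        · rw [Function.update_of_ne hb]
          exact hF1 _ _ hab
    · intro j
      by_cases hj : j = i
      · subst hj
        rw [Function.update_self]
        exact Finset.insert_subset heA ((hF2 j).trans (Finset.erase_subset _ _))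
      · rw [Function.update_of_ne hj]
        exact (hF2 j).trans (Finset.erase_subset _ _)
    · intro j
      by_cases hj : j = i
      · subst hj
        obtain ⟨-, -, h3, h4, h5⟩ := hF3 j
        rw [Function.update_self] at h3 h4 h5 ⊢
        refine ⟨Finset.subset_univ _, by simp, ?_, ?_, ?_⟩
        · intro r hr a ha
          rcases Finset.mem_insert.mp ha with rfl | ha
          · rintro rfl; exact hh hr
          · exact h3 r (Finset.mem_insert_of_mem hr) a ha
        · intro v _ hv
          rw [Finset.filter_insert]
          by_cases hve : head e = v
          · subst hve
            rw [if_pos rfl]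
            have : (F j).filter (fun a => head a = head e) = ∅ := by
              rw [Finset.filter_eq_empty_iff]
              intro a ha
              exact h3 _ (Finset.mem_insert_self _ _) a ha
            rw [this]; simp
          · rw [if_neg hve]
            apply h4 v (Finset.mem_univ _)
            simp only [Finset.mem_insert, not_or]
            exact ⟨fun h => hve h.symm, hv⟩
        · intro v _
          obtain ⟨r, hr, hrv⟩ := h5 v (Finset.mem_univ _)
          have hrv' := diReach_mono (Finset.subset_insert e (F j)) hrv
          rcases Finset.mem_insert.mp hr with rfl | hr
          · refine ⟨tail e, ht, ?_⟩
            exact Relation.ReflTransGen.head ⟨e, Finset.mem_insert_self _ _, rfl, rfl⟩ hrv'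
          · exact ⟨r, hr, hrv'⟩
      · have := hF3 j
        rw [Function.update_of_ne hj] at this ⊢
        exact this

theorem inDeg_pos_of_reach {V α : Type} (tail head : α → V) (B : Finset α) (X : Finset V)
    {r v : V} (hr : r ∉ X) (hv : v ∈ X) (h : DiReach tail head B r v) :
    1 ≤ inDeg tail head B X := by
  by_contra hno
  have h0 : inDeg tail head B X = 0 := by omega
  unfold inDeg at h0
  rw [Finset.card_eq_zero, Finset.filter_eq_empty_iff] at h0
  have : v ∉ X := by
    clear hv
    induction h with
    | refl => exact hr
    | tail _ hs ih =>
      obtain ⟨a, ha, rfl, rfl⟩ := hs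
      intro hh
      exact h0 ha ⟨ih, hh⟩
  exact this hv

/-- Natural-number form of the condition. -/
def PCond {V α J : Type} [Fintype α] (tail head : α → V) (s : J → ℕ) (U : J → Finset V) : Prop :=
  ∀ (I : Finset J) (P : Finset (Finset V)), IsSubpartition P →
    ∑ X ∈ P, (I.filter fun i => X ∩ U i = ∅).card ≤
      ∑ X ∈ P, inDeg tail head (Finset.univ : Finset α) X + ∑ i ∈ I, s i

theorem sum_inter_le {V : Type} (P : Finset (Finset V)) (hP : IsSubpartition P) (Z : Finset V) :
    ∑ X ∈ P, (X ∩ Z).card ≤ Z.card := by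
  rw [← Finset.card_biUnion]
  · apply Finset.card_le_card
    intro v hv
    obtain ⟨X, -, hv⟩ := Finset.mem_biUnion.mp hv
    exact (Finset.mem_inter.mp hv).2
  · intro X hX Y hY hXY
    exact (hP.2 X hX Y hY hXY).mono Finset.inter_subset_left Finset.inter_subset_left

theorem necessity {V α J : Type} [Fintype V] [Fintype α] (tail head : α → V)
    (U : J → Finset V) (F : J → Finset α) (R : J → Finset V)
    (hF : ∀ i j, i ≠ j → Disjoint (F i) (F j))
    (hB : ∀ i, IsBranching tail head Finset.univ (F i) (R i)) :
    PCond tail head (fun i => (R i \ U i).card) U := by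
  intro I P hP
  have key : ∀ X ∈ P, ∀ i, (if X ∩ U i = ∅ then 1 else 0) ≤
      inDeg tail head (F i) X + (X ∩ (R i \ U i)).card := by
    intro X hX i
    split_ifs with h
    · by_cases hR : X ∩ R i = ∅
      · obtain ⟨v, hv⟩ := hP.1 X hX
        obtain ⟨r, hr, hrv⟩ := (hB i).2.2.2.2 v (Finset.mem_univ _)
        have := inDeg_pos_of_reach tail head (F i) X (r := r)
          (fun h' => Finset.eq_empty_iff_forall_notMem.mp hR r (Finset.mem_inter.mpr ⟨h', hr⟩)) hv hrv
        omega
      · have : 0 < (X ∩ (R i \ U i)).card := by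
          rw [Finset.card_pos]
          obtain ⟨v, hv⟩ := Finset.nonempty_iff_ne_empty.mpr hR
          have := Finset.eq_empty_iff_forall_notMem.mp h v
          exact ⟨v, by grind⟩
        omega
    · omega
  have hdeg : ∀ X, ∑ i ∈ I, inDeg tail head (F i) X ≤
      inDeg tail head (Finset.univ : Finset α) X := by
    intro X
    unfold inDeg
    rw [← Finset.card_biUnion]
    · apply Finset.card_le_card
      intro a ha
      obtain ⟨i, -, ha⟩ := Finset.mem_biUnion.mp ha
      simpa using (Finset.mem_filter.mp ha).2
    · intro i _ j _ hij
      exact (hF i j hij).mono (Finset.filter_subset _ _) (Finset.filter_subset _ _)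
  calc ∑ X ∈ P, (I.filter fun i => X ∩ U i = ∅).card
      ≤ ∑ X ∈ P, ∑ i ∈ I, (inDeg tail head (F i) X + (X ∩ (R i \ U i)).card) := by
        apply Finset.sum_le_sum
        intro X hX
        rw [Finset.card_filter]
        exact Finset.sum_le_sum fun i _ => key X hX i
    _ = ∑ X ∈ P, ∑ i ∈ I, inDeg tail head (F i) X +
          ∑ i ∈ I, ∑ X ∈ P, (X ∩ (R i \ U i)).card := by
        rw [Finset.sum_comm (s := I) (t := P), ← Finset.sum_add_distrib]
        simp only [Finset.sum_add_distrib]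
    _ ≤ _ := by
        apply add_le_add
        · exact Finset.sum_le_sum fun X _ => hdeg X
        · exact Finset.sum_le_sum fun i _ => sum_inter_le P hP _

/-- Number of members of the labelled family that contain `v` and carry label `j`. -/
noncomputable def cov {V J : Type} (M : Multiset (Finset V × Finset J)) (v : V) (j : J) : ℕ :=
  M.countP fun a => v ∈ a.1 ∧ j ∈ a.2

/-- Valid labelled families. -/
def LValid {V J : Type} (U : J → Finset V) (m : J → ℕ) (M : Multiset (Finset V × Finset J)) :
    Prop :=
  (∀ a ∈ M, a.1.Nonempty ∧ ∀ j ∈ a.2, a.1 ∩ U j = ∅) ∧ ∀ v j, cov M v j ≤ m j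

/-- Order on labelled sets. -/
def LLe {V J : Type} (a b : Finset V × Finset J) : Prop := a.1 ⊆ b.1 ∧ b.2 ⊆ a.2

/-- Laminarity of labelled families. -/
def LLam {V J : Type} (M : Multiset (Finset V × Finset J)) : Prop :=
  ∀ a ∈ M, ∀ b ∈ M, (a.1 ∩ b.1).Nonempty → LLe a b ∨ LLe b a

/-- Weight of a labelled set for the uncrossing potential. -/
noncomputable def lwt {V J : Type} [Fintype J] (a : Finset V × Finset J) : ℕ :=
  a.1.card + (Finset.univ \ a.2).card

theorem sq_strict (p x y : ℕ) : ∀ (A B : ℕ), A = p + x → B = p + y → 0 < x → 0 < y →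
    A ^ 2 + B ^ 2 < p ^ 2 + (p + x + y) ^ 2 := by
  rintro A B rfl rfl hx hy
  nlinarith [Nat.mul_pos hx hy]

theorem lwt_uncross {V J : Type} [Fintype J] (a b : Finset V × Finset J)
    (h1 : ¬ LLe a b) (h2 : ¬ LLe b a) :
    lwt a ^ 2 + lwt b ^ 2 <
      lwt (a.1 ∩ b.1, a.2 ∪ b.2) ^ 2 + lwt (a.1 ∪ b.1, a.2 ∩ b.2) ^ 2 := by
  obtain ⟨X, L⟩ := a
  obtain ⟨Y, K⟩ := b
  simp only [LLe, lwt] at *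
  have e1 : X.card = (X ∩ Y).card + (X \ Y).card := (Finset.card_inter_add_card_sdiff X Y).symm
  have e2 : Y.card = (X ∩ Y).card + (Y \ X).card := by
    rw [Finset.inter_comm]; exact (Finset.card_inter_add_card_sdiff Y X).symm
  have e3 : (X ∪ Y).card = (X ∩ Y).card + (X \ Y).card + (Y \ X).card := by
    have := Finset.card_union_add_card_inter X Y
    omega
  have f1 : (Finset.univ \ L).card = (Finset.univ \ (L ∪ K)).card + (K \ L).card := by
    rw [← Finset.card_union_of_disjoint]
    · congr 1; ext x; simp; tauto
    · rw [Finset.disjoint_left]; intro x; simp; tauto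
  have f2 : (Finset.univ \ K).card = (Finset.univ \ (L ∪ K)).card + (L \ K).card := by
    rw [← Finset.card_union_of_disjoint]
    · congr 1; ext x; simp; tauto
    · rw [Finset.disjoint_left]; intro x; simp; tauto
  have f3 : (Finset.univ \ (L ∩ K)).card =
      (Finset.univ \ (L ∪ K)).card + (K \ L).card + (L \ K).card := by
    rw [← Finset.card_union_of_disjoint, ← Finset.card_union_of_disjoint]
    · congr 1; ext x; simp; tauto
    · rw [Finset.disjoint_left]; intro x; simp; tauto
    · rw [Finset.disjoint_left]; intro x; simp; tauto
  have g1 : 0 < (X \ Y).card + (K \ L).card := by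
    by_contra h
    apply h1
    have h3 : (X \ Y).card = 0 := by omega
    have h4 : (K \ L).card = 0 := by omega
    rw [Finset.card_eq_zero, Finset.sdiff_eq_empty_iff_subset] at h3 h4
    exact ⟨h3, h4⟩
  have g2 : 0 < (Y \ X).card + (L \ K).card := by
    by_contra h
    apply h2
    have h3 : (Y \ X).card = 0 := by omega
    have h4 : (L \ K).card = 0 := by omega
    rw [Finset.card_eq_zero, Finset.sdiff_eq_empty_iff_subset] at h3 h4
    exact ⟨h3, h4⟩
  have := sq_strict ((X ∩ Y).card + (Finset.univ \ (L ∪ K)).card)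
    ((X \ Y).card + (K \ L).card) ((Y \ X).card + (L \ K).card)
    (X.card + (Finset.univ \ L).card) (Y.card + (Finset.univ \ K).card)
    (by omega) (by omega) g1 g2
  refine lt_of_lt_of_eq this ?_
  congr 2
  omega

theorem lwt_le {V J : Type} [Fintype V] [Fintype J] (a : Finset V × Finset J) :
    lwt a ≤ Fintype.card V + Fintype.card J :=
  add_le_add (Finset.card_le_univ _) (Finset.card_le_univ _)

theorem uncross {V α J : Type} [Fintype V] [Fintype J] (tail head : α → V) (A : Finset α)
    (U : J → Finset V) (m : J → ℕ) (n : ℕ) :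
    ∀ (t : ℕ) (M : Multiset (Finset V × Finset J)), M.card = n → LValid U m M →
      n * (Fintype.card V + Fintype.card J) ^ 2 ≤ (M.map fun a => lwt a ^ 2).sum + t →
      ∃ M' : Multiset (Finset V × Finset J), M'.card = n ∧ LValid U m M' ∧ LLam M' ∧
        (M'.map fun a => a.2.card).sum = (M.map fun a => a.2.card).sum ∧
        (M'.map fun a => inDeg tail head A a.1).sum ≤
          (M.map fun a => inDeg tail head A a.1).sum := by
  intro t
  induction t using Nat.strong_induction_on with
  | _ t ih =>
  intro M hM hv ht
  by_cases hlam : LLam M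
  · exact ⟨M, hM, hv, hlam, rfl, le_rfl⟩
  unfold LLam at hlam
  push Not at hlam
  obtain ⟨a, ha, b, hb, hne, h1, h2⟩ := hlam
  have hab : b ≠ a := by
    rintro rfl
    exact h1 ⟨subset_rfl, subset_rfl⟩
  obtain ⟨N, rfl⟩ := Multiset.exists_cons_of_mem ha
  have hb' : b ∈ N := by
    rcases Multiset.mem_cons.mp hb with h | h
    · exact absurd h hab
    · exact h
  obtain ⟨G, rfl⟩ := Multiset.exists_cons_of_mem hb'
  set a' : Finset V × Finset J := (a.1 ∩ b.1, a.2 ∪ b.2) with ha'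
  set b' : Finset V × Finset J := (a.1 ∪ b.1, a.2 ∩ b.2) with hb'
  have hw := lwt_uncross a b h1 h2
  rw [← ha', ← hb'] at hw
  have hcard : (a' ::ₘ b' ::ₘ G).card = n := by
    simpa using hM
  have hval : LValid U m (a' ::ₘ b' ::ₘ G) := by
    refine ⟨?_, ?_⟩
    · have va := hv.1 a (by simp)
      have vb := hv.1 b (by simp)
      intro x hx
      rcases Multiset.mem_cons.mp hx with rfl | hx
      · refine ⟨hne, ?_⟩
        intro j hj
        rw [Finset.eq_empty_iff_forall_notMem]
        intro v hv'
        simp only [ha', Finset.mem_inter, Finset.mem_union] at hv' hj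
        rcases hj with hj | hj
        · have := Finset.eq_empty_iff_forall_notMem.mp (va.2 j hj) v
          simp at this; tauto
        · have := Finset.eq_empty_iff_forall_notMem.mp (vb.2 j hj) v
          simp at this; tauto
      · rcases Multiset.mem_cons.mp hx with rfl | hx
        · refine ⟨va.1.mono Finset.subset_union_left, ?_⟩
          intro j hj
          rw [Finset.eq_empty_iff_forall_notMem]
          intro v hv'
          simp only [hb', Finset.mem_inter, Finset.mem_union] at hv' hj
          have h3 := Finset.eq_empty_iff_forall_notMem.mp (va.2 j hj.1) v
          have h4 := Finset.eq_empty_iff_forall_notMem.mp (vb.2 j hj.2) v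
          simp at h3 h4; tauto
        · exact hv.1 x (by simp [hx])
    · intro v j
      refine le_trans ?_ (hv.2 v j)
      unfold cov
      simp only [Multiset.countP_cons, ha', hb', Finset.mem_inter, Finset.mem_union]
      by_cases q1 : v ∈ a.1 <;> by_cases q2 : v ∈ b.1 <;> by_cases q3 : j ∈ a.2 <;>
        by_cases q4 : j ∈ b.2 <;> simp [q1, q2, q3, q4]
  have hpot : (((a ::ₘ b ::ₘ G).map fun a => lwt a ^ 2).sum) <
      (((a' ::ₘ b' ::ₘ G).map fun a => lwt a ^ 2).sum) := by
    simp only [Multiset.map_cons, Multiset.sum_cons]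
    omega
  have hbound : (((a' ::ₘ b' ::ₘ G).map fun a => lwt a ^ 2).sum) ≤
      n * (Fintype.card V + Fintype.card J) ^ 2 := by
    rw [← hcard, ← Multiset.card_map (fun a => lwt a ^ 2), ← smul_eq_mul]
    apply Multiset.sum_le_card_nsmul
    intro x hx
    obtain ⟨y, -, rfl⟩ := Multiset.mem_map.mp hx
    exact Nat.pow_le_pow_left (lwt_le y) 2
  obtain ⟨M', r1, r2, r3, r4, r5⟩ := ih (t - 1) (by omega) (a' ::ₘ b' ::ₘ G) hcard hval (by omega)
  refine ⟨M', r1, r2, r3, ?_, ?_⟩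
  · rw [r4]
    simp only [Multiset.map_cons, Multiset.sum_cons, ha', hb']
    have := Finset.card_union_add_card_inter a.2 b.2
    omega
  · refine r5.trans ?_
    simp only [Multiset.map_cons, Multiset.sum_cons, ha', hb']
    have := inDeg_submod tail head A a.1 b.1
    omega

theorem lle_antisymm {V J : Type} {a b : Finset V × Finset J} (h1 : LLe a b) (h2 : LLe b a) :
    a = b :=
  Prod.ext (h1.1.antisymm h2.1) (h2.2.antisymm h1.2)

theorem lle_trans {V J : Type} {a b c : Finset V × Finset J} (h1 : LLe a b) (h2 : LLe b c) :
    LLe a c := ⟨h1.1.trans h2.1, h2.2.trans h1.2⟩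

theorem exists_lmin {V J : Type} [Fintype J] (S : Finset (Finset V × Finset J))
    (a : Finset V × Finset J) (ha : a ∈ S) :
    ∃ b ∈ S, LLe b a ∧ ∀ c ∈ S, LLe c b → c = b := by
  obtain ⟨b, hb, hmin⟩ := Finset.exists_min_image (S.filter fun b => LLe b a) lwt
    ⟨a, Finset.mem_filter.mpr ⟨ha, subset_rfl, subset_rfl⟩⟩
  simp only [Finset.mem_filter] at hb hmin
  refine ⟨b, hb.1, hb.2, ?_⟩
  intro c hc hcb
  have h1 := hmin c ⟨hc, lle_trans hcb hb.2⟩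
  unfold lwt at h1
  have h2 := Finset.card_le_card hcb.1
  have h3 : Finset.univ \ c.2 ⊆ Finset.univ \ b.2 := Finset.sdiff_subset_sdiff subset_rfl hcb.2
  have h4 := Finset.card_le_card h3
  have h5 : c.1 = b.1 := Finset.eq_of_subset_of_card_le hcb.1 (by omega)
  have h6 : Finset.univ \ c.2 = Finset.univ \ b.2 := Finset.eq_of_subset_of_card_le h3 (by omega)
  refine Prod.ext h5 ?_
  rw [← Finset.sdiff_sdiff_eq_self (Finset.subset_univ c.2), h6,
    Finset.sdiff_sdiff_eq_self (Finset.subset_univ b.2)]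

theorem claimB {V α J : Type} [Fintype V] [Fintype α] [Fintype J] (tail head : α → V)
    (s : J → ℕ) (U : J → Finset V) (hcond : PCond tail head s U) (n : ℕ) :
    ∀ (m : J → ℕ) (M : Multiset (Finset V × Finset J)), M.card = n → LValid U m M →
      (M.map fun a => a.2.card).sum ≤
        (M.map fun a => inDeg tail head (Finset.univ : Finset α) a.1).sum + ∑ j, s j * m j := by
  induction n using Nat.strong_induction_on with
  | _ n ih =>
  intro m M0 hM0 hv0
  obtain ⟨M, hM, hv, hlam, hL, hD⟩ := uncross tail head (Finset.univ : Finset α) U m n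
    (n * (Fintype.card V + Fintype.card J) ^ 2) M0 hM0 hv0 (by omega)
  rw [← hL]
  refine le_trans ?_ (Nat.add_le_add_right hD _)
  clear hL hD hv0 hM0 M0
  by_cases hz : M = 0
  · subst hz; simp
  set S := M.toFinset with hS
  set P := S.filter fun b => ∀ c ∈ S, LLe c b → c = b with hP
  have hPM : P.val ≤ M := by
    rw [Multiset.le_iff_subset P.nodup]
    intro x hx
    have : x ∈ P := hx
    simp only [hP, hS, Finset.mem_filter, Multiset.mem_toFinset] at this
    exact this.1
  have hPmem : ∀ x ∈ P, x ∈ M := fun x hx => Multiset.mem_of_le hPM hx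
  have hPmin : ∀ x ∈ P, ∀ c ∈ M, LLe c x → c = x := by
    intro x hx c hc
    exact (Finset.mem_filter.mp hx).2 c (by simpa [hS] using hc)
  have hmin : ∀ a ∈ M, ∃ b ∈ P, LLe b a := by
    intro a ha
    obtain ⟨b, hb, hba, hb2⟩ := exists_lmin S a (by simpa [hS] using ha)
    exact ⟨b, Finset.mem_filter.mpr ⟨hb, hb2⟩, hba⟩
  have hPdisj : ∀ a ∈ P, ∀ b ∈ P, (a.1 ∩ b.1).Nonempty → a = b := by
    intro a ha b hb hab
    rcases hlam a (hPmem a ha) b (hPmem b hb) hab with h | h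
    · exact hPmin b hb a (hPmem a ha) h
    · exact (hPmin a ha b (hPmem b hb) h).symm
  have hPinj : Set.InjOn Prod.fst (P : Set (Finset V × Finset J)) := by
    intro a ha b hb hab
    apply hPdisj a ha b hb
    rw [← hab, Finset.inter_self]
    exact (hv.1 a (hPmem a ha)).1
  obtain ⟨N, hN⟩ := Multiset.le_iff_exists_add.mp hPM
  have hPne : P.Nonempty := by
    obtain ⟨a, ha⟩ := Multiset.exists_mem_of_ne_zero hz
    obtain ⟨b, hb, -⟩ := hmin a ha
    exact ⟨b, hb⟩
  have hNcard : N.card < n := by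
    rw [← hM, hN, Multiset.card_add]
    have : 0 < P.card := Finset.card_pos.mpr hPne
    have h2 : P.val.card = P.card := rfl
    omega
  have hcovM : ∀ v j, cov M v j = cov P.val v j + cov N v j := by
    intro v j
    unfold cov
    rw [hN, Multiset.countP_add]
  have hNval : LValid U (fun j => m j - 1) N := by
    refine ⟨fun a ha => hv.1 a (by rw [hN]; exact Multiset.mem_add.mpr (Or.inr ha)), ?_⟩
    intro v j
    have e1 := hcovM v j
    have e2 := hv.2 v j
    by_contra hcon
    push Not at hcon
    have p0 : cov P.val v j = 0 := by omega
    have pos : 0 < cov M v j := by omega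
    have hmj : cov M v j = m j := by omega
    obtain ⟨a0, ha0, hva0, hja0⟩ := Multiset.countP_pos.mp pos
    obtain ⟨a, ha, -, hamin⟩ := exists_lmin (S.filter fun a => v ∈ a.1 ∧ j ∈ a.2) a0
      (by simp [hS, ha0, hva0, hja0])
    simp only [hS, Finset.mem_filter, Multiset.mem_toFinset] at ha hamin
    obtain ⟨b, hb, hba⟩ := hmin a ha.1
    have hjb : j ∈ b.2 := hba.2 ha.2.2
    have hvb : v ∉ b.1 := by
      intro h
      have : 0 < cov P.val v j := Multiset.countP_pos.mpr ⟨b, hb, h, hjb⟩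
      omega
    obtain ⟨u, hu⟩ := (hv.1 b (hPmem b hb)).1
    have hsub : ∀ c ∈ M, (v ∈ c.1 ∧ j ∈ c.2) → u ∈ c.1 := by
      intro c hc hvc
      have hac : LLe a c := by
        rcases hlam a ha.1 c hc ⟨v, Finset.mem_inter.mpr ⟨ha.2.1, hvc.1⟩⟩ with h | h
        · exact h
        · rw [hamin c ⟨hc, hvc⟩ h]
          exact ⟨subset_rfl, subset_rfl⟩
      exact hac.1 (hba.1 hu)
    have hlt : cov M v j < cov M u j := by
      obtain ⟨G, hG⟩ := Multiset.exists_cons_of_mem (hPmem b hb)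
      have hle : cov G v j ≤ cov G u j := by
        unfold cov
        rw [Multiset.countP_eq_card_filter, Multiset.countP_eq_card_filter]
        apply Multiset.card_le_card
        rw [Multiset.le_filter]
        refine ⟨Multiset.filter_le _ _, ?_⟩
        intro c hc
        have hc' := Multiset.mem_filter.mp hc
        exact ⟨hsub c (by rw [hG]; exact Multiset.mem_cons_of_mem hc'.1) hc'.2, hc'.2.2⟩
      have h1 : cov M v j = cov G v j := by
        unfold cov
        rw [hG, Multiset.countP_cons_of_neg]
        exact fun h => hvb h.1
      have h2 : cov M u j = cov G u j + 1 := by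
        unfold cov
        rw [hG, Multiset.countP_cons_of_pos]
        exact ⟨hu, hjb⟩
      omega
    have := hv.2 u j
    omega
  have hI := ih N.card hNcard (fun j => m j - 1) N rfl hNval
  -- the peeled layer
  set I : Finset J := Finset.univ.filter fun j => 1 ≤ m j with hIdef
  have hsp : IsSubpartition (P.image Prod.fst) := by
    refine ⟨?_, ?_⟩
    · intro X hX
      obtain ⟨a, ha, rfl⟩ := Finset.mem_image.mp hX
      exact (hv.1 a (hPmem a ha)).1
    · intro X hX Y hY hXY
      obtain ⟨a, ha, rfl⟩ := Finset.mem_image.mp hX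
      obtain ⟨b, hb, rfl⟩ := Finset.mem_image.mp hY
      rw [Finset.disjoint_iff_inter_eq_empty]
      by_contra h
      apply hXY
      rw [hPdisj a ha b hb (Finset.nonempty_iff_ne_empty.mpr h)]
  have hPc := hcond I _ hsp
  rw [Finset.sum_image hPinj, Finset.sum_image hPinj] at hPc
  have hPl : ∑ a ∈ P, a.2.card ≤ ∑ a ∈ P, (I.filter fun i => a.1 ∩ U i = ∅).card := by
    apply Finset.sum_le_sum
    intro a ha
    apply Finset.card_le_card
    intro j hj
    have va := hv.1 a (hPmem a ha)
    simp only [hIdef, Finset.mem_filter, Finset.mem_univ, true_and]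
    refine ⟨?_, va.2 j hj⟩
    obtain ⟨u, hu⟩ := va.1
    have : 0 < cov M u j := Multiset.countP_pos.mpr ⟨a, hPmem a ha, hu, hj⟩
    exact lt_of_lt_of_le this (hv.2 u j)
  have hs : ∑ j, s j * m j = ∑ j ∈ I, s j + ∑ j, s j * (m j - 1) := by
    rw [hIdef, Finset.sum_filter, ← Finset.sum_add_distrib]
    apply Finset.sum_congr rfl
    intro j _
    split_ifs with h
    · obtain ⟨q, hq⟩ : ∃ q, m j = q + 1 := ⟨m j - 1, by omega⟩
      rw [hq]; simp; ring
    · have : m j = 0 := by omega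
      simp [this]
  have k1 : (M.map fun a => a.2.card).sum = ∑ a ∈ P, a.2.card + (N.map fun a => a.2.card).sum := by
    rw [hN, Multiset.map_add, Multiset.sum_add]; rfl
  have k2 : (M.map fun a => inDeg tail head (Finset.univ : Finset α) a.1).sum =
      ∑ a ∈ P, inDeg tail head (Finset.univ : Finset α) a.1 +
        (N.map fun a => inDeg tail head (Finset.univ : Finset α) a.1).sum := by
    rw [hN, Multiset.map_add, Multiset.sum_add]; rfl
  omega

/-- One can always enlarge a root set by one vertex. -/
theorem extend_root {V α J : Type} [Fintype V] [Fintype α] [Fintype J] (tail head : α → V)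
    (s : J → ℕ) (U : J → Finset V) (hcond : PCond tail head s U) (i : J) (hi : 1 ≤ s i)
    (hUi : U i ≠ Finset.univ) :
    ∃ v, v ∉ U i ∧ PCond tail head (Function.update s i (s i - 1))
      (Function.update U i (insert v (U i))) := by
  by_contra hno
  push Not at hno
  -- violating pairs
  have hviol : ∀ v : V, ∃ (I : Finset J) (P : Finset (Finset V)), v ∉ U i →
      IsSubpartition P ∧ i ∈ I ∧
      ∑ X ∈ P, inDeg tail head (Finset.univ : Finset α) X + ∑ j ∈ I, s j ≤
        ∑ X ∈ P, (I.filter fun j => X ∩ Function.update U i (insert v (U i)) j = ∅).card := by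
    intro v
    by_cases hv : v ∈ U i
    · exact ⟨∅, ∅, fun h => absurd hv h⟩
    have := hno v hv
    unfold PCond at this
    push Not at this
    obtain ⟨I, P, hP, hlt⟩ := this
    refine ⟨I, P, fun _ => ⟨hP, ?_⟩⟩
    have hiI : i ∈ I := by
      by_contra hiI
      have h0 := hcond I P hP
      have e1 : ∑ j ∈ I, Function.update s i (s i - 1) j = ∑ j ∈ I, s j := by
        apply Finset.sum_congr rfl
        intro j hj
        rw [Function.update_of_ne]
        rintro rfl; exact hiI hj
      have e2 : ∀ X : Finset V,
          (I.filter fun j => X ∩ Function.update U i (insert v (U i)) j = ∅) =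
          (I.filter fun j => X ∩ U j = ∅) := by
        intro X
        apply Finset.filter_congr
        intro j hj
        rw [Function.update_of_ne]
        rintro rfl; exact hiI hj
      simp only [e1, e2] at hlt
      omega
    refine ⟨hiI, ?_⟩
    have e1 : ∑ j ∈ I, Function.update s i (s i - 1) j + 1 = ∑ j ∈ I, s j := by
      rw [← Finset.add_sum_erase _ _ hiI, ← Finset.add_sum_erase _ s hiI, Function.update_self]
      have : ∑ j ∈ I.erase i, Function.update s i (s i - 1) j = ∑ j ∈ I.erase i, s j := by
        apply Finset.sum_congr rfl
        intro j hj
        rw [Function.update_of_ne (Finset.ne_of_mem_erase hj)]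
      omega
    omega
  choose I P hIP using hviol
  set W : Finset V := Finset.univ \ U i with hW
  have hWmem : ∀ v ∈ W, v ∉ U i := fun v hv => (Finset.mem_sdiff.mp hv).2
  set lab : V → Finset V → Finset J := fun v X =>
    (I v).filter fun j => X ∩ Function.update U i (insert v (U i)) j = ∅ with hlab
  set part : V → Multiset (Finset V × Finset J) := fun v =>
    (P v).val.map fun X => (X, lab v X) with hpart
  set M : Multiset (Finset V × Finset J) := ∑ v ∈ W, part v with hMdef
  set m : J → ℕ := fun j => (W.filter fun v => j ∈ I v).card - if j = i then 1 else 0 with hm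
  have hUsub : ∀ v j, U j ⊆ Function.update U i (insert v (U i)) j := by
    intro v j
    by_cases hj : j = i
    · subst hj; rw [Function.update_self]; exact Finset.subset_insert _ _
    · rw [Function.update_of_ne hj]
  have hcovpart : ∀ v ∈ W, ∀ u j, cov (part v) u j ≤ if j ∈ I v then 1 else 0 := by
    intro v hv u j
    obtain ⟨hP, -, -⟩ := hIP v (hWmem v hv)
    have e : cov (part v) u j = ((P v).filter fun X => u ∈ X ∧ j ∈ lab v X).card := by
      simp only [cov, hpart, Multiset.countP_map]
      rfl
    rw [e]
    split_ifs with h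
    · rw [Finset.card_le_one]
      intro X hX Y hY
      rw [Finset.mem_filter] at hX hY
      by_contra hXY
      exact Finset.disjoint_left.mp (hP.2 X hX.1 Y hY.1 hXY) hX.2.1 hY.2.1
    · rw [Nat.le_zero, Finset.card_eq_zero, Finset.filter_eq_empty_iff]
      intro X _ hX
      exact h (Finset.mem_filter.mp hX.2).1
  have hcovi : ∀ v, ∀ u, (u ∈ U i ∨ u = v) → cov (part v) u i = 0 := by
    intro v u huv
    have e : cov (part v) u i = ((P v).filter fun X => u ∈ X ∧ i ∈ lab v X).card := by
      simp only [cov, hpart, Multiset.countP_map]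
      rfl
    rw [e, Finset.card_eq_zero, Finset.filter_eq_empty_iff]
    intro X _ hX
    have h1 := (Finset.mem_filter.mp hX.2).2
    rw [Function.update_self] at h1
    have : u ∈ X ∩ insert v (U i) := by
      rw [Finset.mem_inter, Finset.mem_insert]
      exact ⟨hX.1, huv.symm⟩
    rw [h1] at this
    simp at this
  have hcovM : ∀ u j, cov M u j = ∑ v ∈ W, cov (part v) u j := by
    intro u j
    exact map_sum (Multiset.countPAddMonoidHom fun a : Finset V × Finset J => u ∈ a.1 ∧ j ∈ a.2)
      part W
  have hWne : W.Nonempty := by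
    rw [Finset.nonempty_iff_ne_empty]
    intro h
    rw [hW, Finset.sdiff_eq_empty_iff_subset] at h
    exact hUi (Finset.univ_subset_iff.mp h)
  have hWi : W.filter (fun v => i ∈ I v) = W := by
    rw [Finset.filter_eq_self]
    intro v hv
    exact (hIP v (hWmem v hv)).2.1
  have hval : LValid U m M := by
    refine ⟨?_, ?_⟩
    · intro a ha
      rw [hMdef, Multiset.mem_sum] at ha
      obtain ⟨v, hv, ha⟩ := ha
      obtain ⟨X, hX, rfl⟩ := Multiset.mem_map.mp ha
      refine ⟨(hIP v (hWmem v hv)).1.1 X hX, ?_⟩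
      intro j hj
      have h1 := (Finset.mem_filter.mp hj).2
      exact Finset.subset_empty.mp (h1 ▸ Finset.inter_subset_inter subset_rfl (hUsub v j))
    · intro u j
      rw [hcovM]
      by_cases hj : j = i
      · subst hj
        simp only [hm, hWi, if_true]
        by_cases hu : u ∈ U j
        · rw [Finset.sum_eq_zero]
          · omega
          · intro v _
            exact hcovi v u (Or.inl hu)
        · have huW : u ∈ W := by simp [hW, hu]
          rw [← Finset.add_sum_erase _ _ huW, hcovi u u (Or.inr rfl), zero_add,
            ← Finset.card_erase_of_mem huW, Finset.card_eq_sum_ones]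
          apply Finset.sum_le_sum
          intro v hv
          refine (hcovpart v (Finset.mem_of_mem_erase hv) u j).trans ?_
          split_ifs <;> omega
      · simp only [hm, hj, if_false, Nat.sub_zero]
        rw [Finset.card_filter]
        exact Finset.sum_le_sum fun v hv => hcovpart v hv u j
  have hB := claimB tail head s U hcond _ m M rfl hval
  have hsumM : ∀ f : Finset V × Finset J → ℕ,
      (M.map f).sum = ∑ v ∈ W, ∑ X ∈ P v, f (X, lab v X) := by
    intro f
    have h1 : M.map f = ∑ v ∈ W, (part v).map f :=
      map_sum (Multiset.mapAddMonoidHom f) part W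
    rw [h1]
    have h2 := map_sum (Multiset.sumAddMonoidHom : Multiset ℕ →+ ℕ) (fun v => (part v).map f) W
    simp only [Multiset.coe_sumAddMonoidHom] at h2
    rw [h2]
    apply Finset.sum_congr rfl
    intro v _
    simp only [hpart, Multiset.map_map]
    rfl
  rw [hsumM, hsumM] at hB
  simp only at hB
  have hsum : ∑ v ∈ W, (∑ X ∈ P v, inDeg tail head (Finset.univ : Finset α) X + ∑ j ∈ I v, s j) ≤
      ∑ v ∈ W, ∑ X ∈ P v, (lab v X).card :=
    Finset.sum_le_sum fun v hv => (hIP v (hWmem v hv)).2.2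
  rw [Finset.sum_add_distrib] at hsum
  have hswap : ∑ v ∈ W, ∑ j ∈ I v, s j = ∑ j, s j * (W.filter fun v => j ∈ I v).card := by
    have : ∀ v, ∑ j ∈ I v, s j = ∑ j, if j ∈ I v then s j else 0 := by
      intro v
      rw [← Finset.sum_filter]
      congr 1
      ext j; simp
    simp only [this]
    rw [Finset.sum_comm]
    apply Finset.sum_congr rfl
    intro j _
    rw [← Finset.sum_filter, Finset.sum_const, smul_eq_mul, mul_comm]
  have hlt : ∑ j, s j * m j < ∑ j, s j * (W.filter fun v => j ∈ I v).card := by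
    apply Finset.sum_lt_sum
    · intro j _
      apply Nat.mul_le_mul_left
      simp [hm]
    · refine ⟨i, Finset.mem_univ _, ?_⟩
      simp only [hm, hWi, if_true]
      have := Finset.card_pos.mpr hWne
      exact Nat.mul_lt_mul_of_pos_left (by omega) (by omega)
  omega

theorem choose_roots {V α J : Type} [Fintype V] [Fintype α] [Fintype J] (tail head : α → V)
    (n : ℕ) : ∀ (s : J → ℕ) (U : J → Finset V), ∑ i, s i = n →
      (∀ i, (U i).card + s i ≤ Fintype.card V) → PCond tail head s U →
      ∃ R : J → Finset V, (∀ i, U i ⊆ R i) ∧ (∀ i, (R i).card = (U i).card + s i) ∧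
        PCond tail head (fun _ => 0) R := by
  induction n with
  | zero =>
    intro s U hs _ hc
    have h0 : s = fun _ => 0 := by
      funext i
      exact (Finset.sum_eq_zero_iff.mp hs) i (Finset.mem_univ _)
    subst h0
    exact ⟨U, fun _ => subset_rfl, fun _ => rfl, hc⟩
  | succ n ih =>
    intro s U hs hle hc
    obtain ⟨i, hi⟩ : ∃ i, 1 ≤ s i := by
      by_contra hno
      push Not at hno
      have : ∑ i, s i = 0 := Finset.sum_eq_zero fun i _ => by have := hno i; omega
      omega
    have hUi : U i ≠ Finset.univ := by
      intro h
      have := hle i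
      rw [h, Finset.card_univ] at this
      omega
    obtain ⟨v, hv, hc'⟩ := extend_root tail head s U hc i hi hUi
    have hcd : ∀ j, (Function.update U i (insert v (U i)) j).card +
        Function.update s i (s i - 1) j = (U j).card + s j := by
      intro j
      by_cases hj : j = i
      · subst hj
        rw [Function.update_self, Function.update_self, Finset.card_insert_of_notMem hv]
        omega
      · rw [Function.update_of_ne hj, Function.update_of_ne hj]
    obtain ⟨R, h1, h2, h3⟩ := ih _ _ (by
        rw [← Finset.add_sum_erase _ _ (Finset.mem_univ i)] at hs ⊢
        have : ∑ j ∈ Finset.univ.erase i, Function.update s i (s i - 1) j =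
            ∑ j ∈ Finset.univ.erase i, s j := by
          apply Finset.sum_congr rfl
          intro j hj
          rw [Function.update_of_ne (Finset.ne_of_mem_erase hj)]
        rw [Function.update_self]
        omega) (fun j => by rw [hcd j]; exact hle j) hc'
    refine ⟨R, ?_, ?_, h3⟩
    · intro j
      refine subset_trans ?_ (h1 j)
      by_cases hj : j = i
      · subst hj; rw [Function.update_self]; exact Finset.subset_insert _ _
      · rw [Function.update_of_ne hj]
    · intro j
      rw [h2 j, hcd j]

theorem inDeg_univ_zero {V α : Type} [Fintype V] (tail head : α → V) (A : Finset α) :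
    inDeg tail head A (Finset.univ : Finset V) = 0 := by
  unfold inDeg; simp

theorem sufficiency {V α J : Type} [Fintype V] [Nonempty V] [Fintype α] [Fintype J]
    (tail head : α → V) (R : J → Finset V) (hc : PCond tail head (fun _ => 0) R) :
    ∃ F : J → Finset α, (∀ i j, i ≠ j → Disjoint (F i) (F j)) ∧
      ∀ i, IsBranching tail head Finset.univ (F i) (R i) := by
  have hX : ∀ X : Finset V, X.Nonempty → dem R X ≤ inDeg tail head (Finset.univ : Finset α) X := by
    intro X hX
    have := hc Finset.univ {X} ⟨by simpa using hX, by
      intro A hA B hB hAB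
      rw [Finset.mem_singleton] at hA hB
      exact absurd (hA.trans hB.symm) hAB⟩
    simpa [dem] using this
  have hne : ∀ i, (R i).Nonempty := by
    intro i
    by_contra h
    rw [Finset.not_nonempty_iff_eq_empty] at h
    have h1 := hX Finset.univ Finset.univ_nonempty
    rw [inDeg_univ_zero] at h1
    have : 0 < dem R (Finset.univ : Finset V) := by
      unfold dem
      exact Finset.card_pos.mpr ⟨i, by simp [h]⟩
    omega
  obtain ⟨F, h1, -, h3⟩ := edmonds tail head _ Finset.univ R hne rfl hX
  exact ⟨F, h1, h3⟩

/-- **Lemma (packing spanning branchings with prescribed roots).**  For `k ≥ 0`, integers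
`c_1, …, c_{k+1} ≤ |V|` and sets `U_1, …, U_{k+1} ⊆ V` with `|U_i| ≤ c_i`, there exist
pairwise arc-disjoint spanning branchings `F_1, …, F_{k+1}` with `R(F_i) ⊇ U_i` and
`|R(F_i)| = c_i` if and only if for every `I ⊆ {1,…,k+1}` and every subpartition `P` of `V`:
`∑_{X∈P} d_A^-(X) ≥ ∑_{X∈P} |{i ∈ I : X ∩ U_i = ∅}| - ∑_{i∈I} (c_i - |U_i|)`. -/
theorem pack_branchings {V α : Type} [Fintype V] [Nonempty V] [Fintype α]
    (tail head : α → V) (hloopless : ∀ a : α, tail a ≠ head a)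
    (k : ℕ) (c : Fin (k + 1) → ℕ) (U : Fin (k + 1) → Finset V)
    (hc : ∀ i, c i ≤ Fintype.card V) (hU : ∀ i, (U i).card ≤ c i) :
    (∃ (F : Fin (k + 1) → Finset α) (R : Fin (k + 1) → Finset V),
        (∀ i j, i ≠ j → Disjoint (F i) (F j)) ∧
        ∀ i, IsBranching tail head Finset.univ (F i) (R i) ∧
          U i ⊆ R i ∧ (R i).card = c i) ↔
    (∀ (I : Finset (Fin (k + 1))) (P : Finset (Finset V)), IsSubpartition P →
      (∑ X ∈ P, ((I.filter fun i => X ∩ U i = ∅).card : ℤ)) -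
          (∑ i ∈ I, ((c i : ℤ) - ((U i).card : ℤ))) ≤
        ∑ X ∈ P, (inDeg tail head (Finset.univ : Finset α) X : ℤ)) := by
  have hequiv : ∀ s : Fin (k + 1) → ℕ, (∀ i, (U i).card + s i = c i) →
      (PCond tail head s U ↔
      (∀ (I : Finset (Fin (k + 1))) (P : Finset (Finset V)), IsSubpartition P →
      (∑ X ∈ P, ((I.filter fun i => X ∩ U i = ∅).card : ℤ)) -
          (∑ i ∈ I, ((c i : ℤ) - ((U i).card : ℤ))) ≤
        ∑ X ∈ P, (inDeg tail head (Finset.univ : Finset α) X : ℤ))) := by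
    intro s hs
    unfold PCond
    refine forall_congr' fun I => forall_congr' fun P => imp_congr_right fun _ => ?_
    have h1 : ∑ i ∈ I, ((c i : ℤ) - ((U i).card : ℤ)) = ((∑ i ∈ I, s i : ℕ) : ℤ) := by
      push_cast
      apply Finset.sum_congr rfl
      intro i _
      have := hs i
      omega
    rw [h1, sub_le_iff_le_add]
    norm_cast
  constructor
  · rintro ⟨F, R, hF, hR⟩
    rw [← hequiv (fun i => (R i \ U i).card)]
    · exact necessity tail head U F R hF fun i => (hR i).1
    · intro i
      rw [← (hR i).2.2, add_comm]
      exact Finset.card_sdiff_add_card_eq_card (hR i).2.1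
  · intro h
    rw [← hequiv (fun i => c i - (U i).card) (fun i => by have := hU i; omega)] at h
    obtain ⟨R, h1, h2, h3⟩ := choose_roots tail head _ _ U rfl
      (fun i => by have := hU i; have := hc i; omega) h
    obtain ⟨F, hF1, hF2⟩ := sufficiency tail head R h3
    exact ⟨F, R, hF1, fun i => ⟨hF2 i, h1 i, by have := hU i; have := h2 i; omega⟩⟩
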